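/- arXiv:1210.3862 — 2 statements merged into one kernel-verified Lean document; each statement's English description precedes it below -/
import Mathlib

section
/- For all x ≥ 2, ∑_{n ≤ x} (D_K(n) Λ_K*(n))² ≪ x·log x, where the implied constant depends only on K. -/
/-!
Setting: `K` is a number field, Galois over `ℚ`, with ring of integers `𝓞 K`.
We formalize the objects from Smith, "A generalization of the
Barban-Davenport-Halberstam Theorem to number fields".
-/

open NumberField Ideal
open scoped Classical BigOperators

noncomputable section

/-- `𝔞` is a (positive) power of a nonzero prime ideal of `𝓞 K`. -/
def IsPrimeIdealPower {K : Type*} [Field K] [NumberField K] (𝔞 : Ideal (𝓞 K)) : Prop :=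
  ∃ (𝔭 : Ideal (𝓞 K)) (m : ℕ), 𝔭.IsPrime ∧ 𝔭 ≠ ⊥ ∧ 1 ≤ m ∧ 𝔞 = 𝔭 ^ m

/-- The von Mangoldt function on ideals of `𝓞 K`: `Λ_K(𝔭^m) = log N𝔭`, and `0` otherwise.
(For `𝔞 = 𝔭^m` with `𝔭` prime, the radical of `𝔞` is `𝔭`.) -/
def LambdaK (K : Type*) [Field K] [NumberField K] (𝔞 : Ideal (𝓞 K)) : ℝ :=
  if IsPrimeIdealPower 𝔞 then Real.log (absNorm 𝔞.radical) else 0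

/-- `ψ_K(x; q, a) = ∑_{N𝔭^m ≤ x, N𝔭^m ≡ a (mod q)} log N𝔭`. -/
def psiK (K : Type*) [Field K] [NumberField K] (x : ℝ) (q : ℕ) (a : ZMod q) : ℝ :=
  ∑' 𝔞 : Ideal (𝓞 K),
    if (absNorm 𝔞 : ℝ) ≤ x ∧ ((absNorm 𝔞 : ZMod q) = a) then LambdaK K 𝔞 else 0

/-- `G_q`: the image of `Gal(K(ζ_q)/K)` in `(ℤ/qℤ)ˣ` under restriction to `ℚ(ζ_q)` followed
by the canonical isomorphism `Gal(ℚ(ζ_q)/ℚ) ≅ (ℤ/qℤ)ˣ`; concretely, the range of the map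
sending `σ ∈ Gal(K(ζ_q)/K)` to the exponent `a ∈ (ℤ/qℤ)ˣ` with `σ(ζ_q) = ζ_q^a`. -/
def Gq (K : Type*) [Field K] [NumberField K] (q : ℕ) : Subgroup (ZMod q)ˣ :=
  if h : 0 < q then
    haveI : NeZero q := ⟨h.ne'⟩
    haveI : NeZero (((⟨q, h⟩ : ℕ+) : ℕ) : K) := ⟨Nat.cast_ne_zero.mpr h.ne'⟩
    ((IsCyclotomicExtension.zeta_spec (⟨q, h⟩ : ℕ+) K
        (CyclotomicField (⟨q, h⟩ : ℕ+) K)).autToPow K).range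
  else ⊥

/-- `φ_K(q) = |G_q|`. -/
def phiK (K : Type*) [Field K] [NumberField K] (q : ℕ) : ℕ :=
  Nat.card (Gq K q)

/-- `ψ_K(x, χ∘N) = ∑_{N𝔞 ≤ x} χ(N𝔞) Λ_K(𝔞)`. -/
def psiKChi (K : Type*) [Field K] [NumberField K] (x : ℝ) {q : ℕ}
    (χ : DirichletCharacter ℂ q) : ℂ :=
  ∑' 𝔞 : Ideal (𝓞 K),
    if (absNorm 𝔞 : ℝ) ≤ x then χ (absNorm 𝔞 : ZMod q) * (LambdaK K 𝔞 : ℂ) else 0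

/-- `ψ'_K(x, χ∘N)`: equals `ψ_K(x, χ∘N) − x` when `χ` is trivial on `G_q`,
and `ψ_K(x, χ∘N)` otherwise. -/
def psiKChi' (K : Type*) [Field K] [NumberField K] (x : ℝ) {q : ℕ}
    (χ : DirichletCharacter ℂ q) : ℂ :=
  if ∀ a ∈ Gq K q, χ (a : ZMod q) = 1 then psiKChi K x χ - x else psiKChi K x χ

/-- The common residue degree `f(K/ℚ; p)` of the primes of `K` above `p`
(well-defined when `K/ℚ` is Galois): any prime `𝔭` above `p` has `N𝔭 = p^f`. -/
def resDeg (K : Type*) [Field K] [NumberField K] (p : ℕ) : ℕ :=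
  if h : ∃ 𝔭 : Ideal (𝓞 K), 𝔭.IsPrime ∧ 𝔭 ≠ ⊥ ∧ (p : 𝓞 K) ∈ 𝔭 then
    (absNorm h.choose).factorization p
  else 0

/-- `D_K(n)`: the number of prime ideal powers `𝔭^m` of `𝓞 K` with `N𝔭^m = n`. -/
def DK (K : Type*) [Field K] [NumberField K] (n : ℕ) : ℕ :=
  Nat.card {𝔞 : Ideal (𝓞 K) // IsPrimeIdealPower 𝔞 ∧ absNorm 𝔞 = n}

/-- `Λ_K^*(n) = f(K/ℚ; p) · log p` if `n = p^k` is a prime power, and `0` otherwise. -/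
def LambdaStarK (K : Type*) [Field K] [NumberField K] (n : ℕ) : ℝ :=
  if IsPrimePow n then (resDeg K n.minFac : ℝ) * Real.log n.minFac else 0

end

/-- A prime of `𝓞 K` containing the rational prime `p` has norm of `p`-adic valuation at most `[K : ℚ]`. -/
lemma factorization_absNorm_le_finrank {K : Type*} [Field K] [NumberField K] {p : ℕ}
    (hp : p.Prime) {𝔭 : Ideal (𝓞 K)} (hmem : (p : 𝓞 K) ∈ 𝔭) :
    (absNorm 𝔭).factorization p ≤ Module.finrank ℚ K := by
  have hdvd : absNorm 𝔭 ∣ p ^ Module.finrank ℚ K := by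
    rw [← RingOfIntegers.rank K, ← absNorm_span_natCast]
    exact absNorm_dvd_absNorm_of_le ((span_singleton_le_iff_mem 𝔭).mpr hmem)
  have h := (Nat.factorization_le_iff_dvd (ne_zero_of_dvd_ne_zero
    (pow_ne_zero _ hp.ne_zero) hdvd) (pow_ne_zero _ hp.ne_zero)).mpr hdvd p
  simpa [hp.factorization_self] using h

lemma resDeg_le_finrank (K : Type*) [Field K] [NumberField K] {p : ℕ} (hp : p.Prime) :
    resDeg K p ≤ Module.finrank ℚ K := by
  unfold resDeg
  split_ifs with h
  · exact factorization_absNorm_le_finrank hp h.choose_spec.2.2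
  · exact Nat.zero_le _

lemma IsPrimeIdealPower.radical_mem_primesOver {K : Type*} [Field K] [NumberField K]
    {𝔞 : Ideal (𝓞 K)} (h𝔞 : IsPrimeIdealPower 𝔞) {p k : ℕ} (hp : p.Prime)
    (hnorm : absNorm 𝔞 = p ^ k) :
    𝔞.radical ∈ primesOver (span {(p : ℤ)}) (𝓞 K) := by
  obtain ⟨𝔭, m, h𝔭, -, hm, rfl⟩ := h𝔞
  rw [radical_pow 𝔭 (by omega), h𝔭.radical]
  refine ⟨h𝔭, ?_⟩
  have hmem : (p : 𝓞 K) ∈ 𝔭 := by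
    refine h𝔭.mem_of_pow_mem k (pow_le_self (n := m) (by omega) ?_)
    have := absNorm_mem (𝔭 ^ m)
    rwa [hnorm, Nat.cast_pow] at this
  have : Fact p.Prime := ⟨hp⟩
  rw [liesOver_iff]
  refine (Int.ideal_span_isMaximal_of_prime p).eq_of_le (h𝔭.under ℤ).ne_top ?_
  simpa [span_singleton_le_iff_mem, mem_comap] using hmem

/-- A prime ideal power is determined by its radical and its norm. -/
lemma IsPrimeIdealPower.eq_of_radical_eq {K : Type*} [Field K] [NumberField K]
    {𝔞 𝔟 : Ideal (𝓞 K)} (h𝔞 : IsPrimeIdealPower 𝔞) (h𝔟 : IsPrimeIdealPower 𝔟)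
    (hrad : 𝔞.radical = 𝔟.radical) (hnorm : absNorm 𝔞 = absNorm 𝔟) : 𝔞 = 𝔟 := by
  obtain ⟨𝔭, m, h𝔭, h𝔭0, hm, rfl⟩ := h𝔞
  obtain ⟨𝔮, l, h𝔮, -, hl, rfl⟩ := h𝔟
  rw [radical_pow 𝔭 (by omega), h𝔭.radical, radical_pow 𝔮 (by omega), h𝔮.radical] at hrad
  subst hrad
  have h0 : absNorm 𝔭 ≠ 0 := absNorm_eq_zero_iff.not.mpr h𝔭0
  have h1 : absNorm 𝔭 ≠ 1 := absNorm_eq_one_iff.not.mpr h𝔭.ne_top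
  rw [map_pow, map_pow] at hnorm
  rw [Nat.pow_right_injective (by omega : 2 ≤ absNorm 𝔭) hnorm]

lemma card_primesOver_le_finrank (K : Type*) [Field K] [NumberField K] {p : ℕ} (hp : p.Prime) :
    Nat.card (primesOver (span {(p : ℤ)}) (𝓞 K)) ≤ Module.finrank ℚ K := by
  have : Fact p.Prime := ⟨hp⟩
  rw [← RingOfIntegers.rank K, Nat.card_eq_fintype_card,
    ← sum_ramification_inertia_eq_finrank (span {(p : ℤ)}) (𝓞 K), Fintype.card,
    Finset.card_eq_sum_ones]
  refine Finset.sum_le_sum fun 𝔭 _ => ?_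
  have := 𝔭.2.1
  exact Nat.mul_pos (ramificationIdx_pos 𝔭.1 ℤ) (inertiaDeg_pos 𝔭.1 ℤ)

lemma DK_le_finrank (K : Type*) [Field K] [NumberField K] {n : ℕ} (hn : IsPrimePow n) :
    DK K n ≤ Module.finrank ℚ K := by
  obtain ⟨p, k, hp, -, rfl⟩ := (isPrimePow_nat_iff n).mp hn
  have : Fact p.Prime := ⟨hp⟩
  refine le_trans ?_ (card_primesOver_le_finrank K hp)
  refine Nat.card_le_card_of_injective
    (fun 𝔞 : {𝔞 : Ideal (𝓞 K) // IsPrimeIdealPower 𝔞 ∧ absNorm 𝔞 = p ^ k} =>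
      (⟨𝔞.1.radical, 𝔞.2.1.radical_mem_primesOver hp 𝔞.2.2⟩ :
        primesOver (span {(p : ℤ)}) (𝓞 K))) fun 𝔞 𝔟 h => Subtype.ext ?_
  exact 𝔞.2.1.eq_of_radical_eq 𝔟.2.1 (congrArg Subtype.val h) (𝔞.2.2.trans 𝔟.2.2.symm)

lemma abs_DK_mul_LambdaStarK_le (K : Type*) [Field K] [NumberField K] (n : ℕ) :
    |(DK K n : ℝ) * LambdaStarK K n| ≤
      (Module.finrank ℚ K : ℝ) ^ 2 * ArithmeticFunction.vonMangoldt n := by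
  rw [ArithmeticFunction.vonMangoldt_apply, LambdaStarK]
  split_ifs with hn
  · have hlog : 0 ≤ Real.log n.minFac := Real.log_natCast_nonneg _
    have hD : (DK K n : ℝ) ≤ Module.finrank ℚ K := mod_cast DK_le_finrank K hn
    have hf : (resDeg K n.minFac : ℝ) ≤ Module.finrank ℚ K :=
      mod_cast resDeg_le_finrank K (Nat.minFac_prime hn.ne_one)
    rw [abs_of_nonneg (by positivity), ← mul_assoc, sq]
    gcongr
  · simp

lemma sum_vonMangoldt_sq_le {x : ℝ} (hx : 1 ≤ x) :
    ∑ n ∈ Finset.Icc 1 ⌊x⌋₊, ArithmeticFunction.vonMangoldt n ^ 2 ≤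
      (Real.log 4 + 4) * (x * Real.log x) := by
  calc ∑ n ∈ Finset.Icc 1 ⌊x⌋₊, ArithmeticFunction.vonMangoldt n ^ 2
      ≤ ∑ n ∈ Finset.Icc 1 ⌊x⌋₊, Real.log x * ArithmeticFunction.vonMangoldt n := by
        refine Finset.sum_le_sum fun n hn => ?_
        obtain ⟨hn1, hnx⟩ := Finset.mem_Icc.mp hn
        rw [sq]
        refine mul_le_mul_of_nonneg_right (ArithmeticFunction.vonMangoldt_le_log.trans ?_)
          ArithmeticFunction.vonMangoldt_nonneg
        exact Real.log_le_log (by exact_mod_cast hn1) ((Nat.le_floor_iff (by linarith)).mp hnx)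
    _ = Real.log x * Chebyshev.psi x := by
        rw [← Finset.mul_sum, Chebyshev.psi]
        rfl
    _ ≤ Real.log x * ((Real.log 4 + 4) * x) :=
        mul_le_mul_of_nonneg_left (Chebyshev.psi_le_const_mul_self (by linarith))
          (Real.log_nonneg hx)
    _ = _ := by ring

/-- For all `x ≥ 2`, `∑_{n ≤ x} (D_K(n) Λ_K^*(n))² ≪ x log x`,
the implied constant depending only on `K`. -/
theorem sum_sq_DK_LambdaStar (K : Type*) [Field K] [NumberField K] [IsGalois ℚ K] :
    ∃ C : ℝ, 0 < C ∧ ∀ x : ℝ, 2 ≤ x →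
      ∑ n ∈ Finset.Icc 1 ⌊x⌋₊, ((DK K n : ℝ) * LambdaStarK K n) ^ 2 ≤
        C * (x * Real.log x) := by
  set d : ℝ := (Module.finrank ℚ K : ℝ)
  have hd : 0 < d := Nat.cast_pos.mpr Module.finrank_pos
  have hlog4 : 0 ≤ Real.log 4 := Real.log_nonneg (by norm_num)
  refine ⟨d ^ 4 * (Real.log 4 + 4), by positivity, fun x hx => ?_⟩
  calc ∑ n ∈ Finset.Icc 1 ⌊x⌋₊, ((DK K n : ℝ) * LambdaStarK K n) ^ 2
      ≤ ∑ n ∈ Finset.Icc 1 ⌊x⌋₊, d ^ 4 * ArithmeticFunction.vonMangoldt n ^ 2 := by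
        refine Finset.sum_le_sum fun n _ => ?_
        calc ((DK K n : ℝ) * LambdaStarK K n) ^ 2
            ≤ (d ^ 2 * ArithmeticFunction.vonMangoldt n) ^ 2 :=
              sq_le_sq.mpr ((abs_DK_mul_LambdaStarK_le K n).trans (le_abs_self _))
          _ = _ := by ring
    _ ≤ d ^ 4 * ((Real.log 4 + 4) * (x * Real.log x)) := by
        rw [← Finset.mul_sum]
        exact mul_le_mul_of_nonneg_left (sum_vonMangoldt_sq_le (by linarith)) (by positivity)
    _ = _ := by ring
end

section
/- For all x ≥ 2 and all U, Q with 1 ≤ 2U ≤ Q, one has ∑_{U < q ≤ 2U} (1/φ(q))·log(2Q/q)·∑_{χ primitive mod q} |ψ'_K(x, χ∘N)|² ≪ (x/U + U)·x·log x·log(2Q/U), where the inner sum is over primitive Dirichlet characters modulo q and the implied constant depends only on K. -/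
/-!
Setting: `K` is a number field, Galois over `ℚ`, with ring of integers `𝓞 K`.
We formalize the objects from Smith, "A generalization of the
Barban-Davenport-Halberstam Theorem to number fields".
-/

open NumberField Ideal
open scoped Classical BigOperators

section GaloisImage

open IsCyclotomicExtension Polynomial

variable (K : Type*) [Field K] [NumberField K]

theorem Gq_eq_range (q : ℕ) [NeZero q] :
    Gq K q = ((zeta_spec q K (CyclotomicField q K)).autToPow K).range :=
  dif_pos (NeZero.pos q)

theorem card_Gq (q : ℕ) [NeZero q] :
    Nat.card (Gq K q) = Module.finrank K (CyclotomicField q K) := by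
  have := IsCyclotomicExtension.isGalois {q} K (CyclotomicField q K)
  have := IsCyclotomicExtension.finiteDimensional {q} K (CyclotomicField q K)
  rw [Gq_eq_range, ← IsGalois.card_aut_eq_finrank]
  exact (Nat.card_congr (MonoidHom.ofInjective
    ((zeta_spec q K (CyclotomicField q K)).autToPow_injective K)).toEquiv).symm

theorem totient_le_card_Gq_mul_finrank (q : ℕ) [NeZero q] :
    q.totient ≤ Nat.card (Gq K q) * Module.finrank ℚ K := by
  have := IsCyclotomicExtension.finiteDimensional {q} K (CyclotomicField q K)
  have : FiniteDimensional ℚ (CyclotomicField q K) :=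
    Module.Finite.trans K (CyclotomicField q K)
  rw [card_Gq, mul_comm, Module.finrank_mul_finrank]
  have h := zeta_spec q K (CyclotomicField q K)
  have hmin := Polynomial.cyclotomic_eq_minpoly_rat h (NeZero.pos q)
  calc q.totient = (cyclotomic q ℚ).natDegree := (natDegree_cyclotomic q ℚ).symm
    _ = (minpoly ℚ (zeta q K (CyclotomicField q K))).natDegree := by rw [hmin]
    _ ≤ _ := minpoly.natDegree_le _

theorem index_Gq_le (q : ℕ) [NeZero q] : (Gq K q).index ≤ Module.finrank ℚ K := by
  have h := totient_le_card_Gq_mul_finrank K q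
  rw [← ZMod.card_units_eq_totient, ← Nat.card_eq_fintype_card,
    ← (Gq K q).card_mul_index] at h
  exact Nat.le_of_mul_le_mul_left h Nat.card_pos

theorem unitsMap_mem_Gq {q N : ℕ} [NeZero q] [NeZero N] (hd : q ∣ N) {a : (ZMod N)ˣ}
    (ha : a ∈ Gq K N) : ZMod.unitsMap hd a ∈ Gq K q := by
  rw [Gq_eq_range] at ha ⊢
  obtain ⟨σ, rfl⟩ := ha
  set ζN := zeta N K (CyclotomicField N K)
  have hN : IsPrimitiveRoot ζN N := zeta_spec N K (CyclotomicField N K)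
  have hq := zeta_spec q K (CyclotomicField q K)
  obtain ⟨d, hdN⟩ := id hd
  have hprim : IsPrimitiveRoot (ζN ^ d) q := hN.pow (NeZero.pos N) (by rw [hdN, mul_comm])
  have hsplit : ((cyclotomic q K).map (algebraMap K (CyclotomicField N K))).Splits := by
    rw [map_cyclotomic]
    exact (X_pow_sub_one_splits hprim).of_dvd
      (X_pow_sub_C_ne_zero (NeZero.pos q) 1) (by simpa using cyclotomic.dvd_X_pow_sub_one q _)
  have := IsCyclotomicExtension.splitting_field_cyclotomic q K (CyclotomicField q K)
  let f : CyclotomicField q K →ₐ[K] CyclotomicField N K :=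
    IsSplittingField.lift _ (cyclotomic q K) hsplit
  let := f.toRingHom.toAlgebra
  have : IsScalarTower K (CyclotomicField q K) (CyclotomicField N K) :=
    IsScalarTower.of_algHom f
  have := IsCyclotomicExtension.isGalois {q} K (CyclotomicField q K)
  refine ⟨σ.restrictNormal (CyclotomicField q K), ?_⟩
  set τ := σ.restrictNormal (CyclotomicField q K)
  set ζq := zeta q K (CyclotomicField q K)
  have hfq : IsPrimitiveRoot (f ζq) q := hq.map_of_injective f.toRingHom.injective
  have h1 : f (τ ζq) = σ (f ζq) := σ.restrictNormal_commutes (CyclotomicField q K) ζq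
  obtain ⟨i, -, hi⟩ := hN.eq_pow_of_pow_eq_one
    (ξ := f ζq) ((hfq.pow_eq_one_iff_dvd N).mpr hd)
  have h2 : σ (f ζq) = f ζq ^ (hN.autToPow K σ : ZMod N).val := by
    rw [← hi, map_pow, ← hN.autToPow_spec K σ, ← pow_mul, ← pow_mul, mul_comm]
  have h3 : f (τ ζq) = f ζq ^ (hq.autToPow K τ : ZMod q).val := by
    rw [← map_pow, hq.autToPow_spec K τ]
  have h4 := h3.symm.trans (h1.trans h2)
  rw [(hfq.isOfFinOrder (NeZero.ne q)).pow_eq_pow_iff_modEq, ← hfq.eq_orderOf,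
    ← ZMod.natCast_eq_natCast_iff] at h4
  ext
  rw [ZMod.unitsMap_val]
  simpa [ZMod.natCast_val] using h4

/-- There are only finitely many moduli carrying a primitive character trivial on `Gq`. -/
theorem exists_bound_isPrimitive_trivial_on_Gq :
    ∃ B : ℕ, ∀ q : ℕ, q ≠ 0 → (∃ χ : DirichletCharacter ℂ q, χ.IsPrimitive ∧
      ∀ a ∈ Gq K q, χ (a : ZMod q) = 1) → q ≤ B := by
  set S : Set ℕ := {q | q ≠ 0 ∧ ∃ χ : DirichletCharacter ℂ q, χ.IsPrimitive ∧
      ∀ a ∈ Gq K q, χ (a : ZMod q) = 1} with hS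
  suffices hfin : S.Finite by
    obtain ⟨B, hB⟩ := hfin.bddAbove
    exact ⟨B, fun q h0 h ↦ hB ⟨h0, h⟩⟩
  by_contra hinf
  obtain ⟨T, hTS, hTc⟩ := Set.Infinite.exists_subset_card_eq hinf (Module.finrank ℚ K + 1)
  have hT0 : ∀ q ∈ T, q ≠ 0 := fun q hq ↦ (hTS hq).1
  have : NeZero (∏ q ∈ T, q) := ⟨Finset.prod_ne_zero_iff.mpr hT0⟩
  set N := ∏ q ∈ T, q
  choose χ hχp hχ using fun q : T ↦ (hTS q.2).2
  have hdvd : ∀ q : T, (q : ℕ) ∣ N := fun q ↦ Finset.dvd_prod_of_mem _ q.2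
  let A := (MulChar.subgroupOrderIsoSubgroupMulChar (ZMod N) ℂ (Gq K N)).ofDual
  have hA : Nat.card A = (Gq K N).index := MulChar.card_subgroupOrderIsoSubgroupMulChar
  let g : T → A := fun q ↦ ⟨DirichletCharacter.changeLevel (hdvd q) (χ q), by
    have : NeZero (q : ℕ) := ⟨hT0 q q.2⟩
    rw [MulChar.mem_subgroupOrderIsoSubgroupMulChar_iff]
    intro a ha
    rw [DirichletCharacter.changeLevel_eq_cast_of_dvd, ← ZMod.unitsMap_val (hdvd q)]
    exact hχ q _ (unitsMap_mem_Gq K (hdvd q) ha)⟩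
  have hg : Function.Injective g := by
    intro q q' h
    have h' := congrArg DirichletCharacter.conductor (congrArg Subtype.val h)
    simp only [g, DirichletCharacter.conductor_changeLevel] at h'
    rw [(DirichletCharacter.isPrimitive_def _).mp (hχp q),
      (DirichletCharacter.isPrimitive_def _).mp (hχp q')] at h'
    exact Subtype.ext h'
  have hcard := Nat.card_le_card_of_injective g hg
  rw [hA, Nat.card_eq_fintype_card, Fintype.card_coe, hTc] at hcard
  have := index_Gq_le K N
  omega

end GaloisImage

section LargeSieve

open Complex ComplexConjugate

/-- The additive character `t ↦ exp (2πit)` of the real line. -/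
noncomputable def expTwoPi (t : ℝ) : ℂ := exp (2 * Real.pi * t * I)

theorem expTwoPi_add (s t : ℝ) : expTwoPi (s + t) = expTwoPi s * expTwoPi t := by
  rw [expTwoPi, expTwoPi, expTwoPi, ← exp_add]
  push_cast
  ring_nf

theorem conj_expTwoPi (t : ℝ) : conj (expTwoPi t) = expTwoPi (-t) := by
  rw [expTwoPi, expTwoPi, ← exp_conj]
  simp [Complex.conj_ofNat]

theorem norm_expTwoPi (t : ℝ) : ‖expTwoPi t‖ = 1 := by
  rw [expTwoPi, ← ofReal_ofNat, ← ofReal_mul, ← ofReal_mul, norm_exp_ofReal_mul_I]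

theorem expTwoPi_intCast (m : ℤ) : expTwoPi m = 1 := by
  rw [expTwoPi, exp_eq_one_iff]
  exact ⟨m, by push_cast; ring⟩

theorem expTwoPi_nat_mul (k : ℕ) (t : ℝ) : expTwoPi (k * t) = expTwoPi t ^ k := by
  rw [expTwoPi, expTwoPi, ← exp_nat_mul]
  push_cast
  ring_nf

theorem four_mul_abs_sub_round_le_norm_expTwoPi_sub_one (t : ℝ) :
    4 * |t - round t| ≤ ‖expTwoPi t - 1‖ := by
  have h : expTwoPi t = exp (I * (2 * Real.pi * (t - round t) : ℝ)) := by
    have h1 : expTwoPi t = expTwoPi (t - round t) := by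
      conv_lhs => rw [← sub_add_cancel t (round t : ℝ), expTwoPi_add, expTwoPi_intCast, mul_one]
    rw [h1, expTwoPi]
    push_cast
    ring_nf
  have hs := abs_sub_round t
  rw [h, norm_exp_I_mul_ofReal_sub_one, norm_mul, Real.norm_ofNat, Real.norm_eq_abs]
  have hpi := Real.pi_pos
  have hx : |2 * Real.pi * (t - round t) / 2| = Real.pi * |t - round t| := by
    rw [show 2 * Real.pi * (t - round t) / 2 = Real.pi * (t - round t) by ring, abs_mul,
      abs_of_pos hpi]
  have hsin := Real.mul_abs_le_abs_sin (x := 2 * Real.pi * (t - round t) / 2)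
    (by rw [hx]; nlinarith)
  rw [hx] at hsin
  have : 2 / Real.pi * (Real.pi * |t - round t|) = 2 * |t - round t| := by
    field_simp
  linarith

/-- The geometric sum `∑_{k < L} exp (2πikt)`. -/
noncomputable def geomKernel (L : ℕ) (t : ℝ) : ℂ := ∑ k ∈ Finset.range L, expTwoPi (k * t)

theorem norm_geomKernel_le (L : ℕ) (t : ℝ) : ‖geomKernel L t‖ ≤ L := by
  refine (norm_sum_le _ _).trans ?_
  simp [norm_expTwoPi]

theorem norm_geomKernel_neg (L : ℕ) (t : ℝ) : ‖geomKernel L (-t)‖ = ‖geomKernel L t‖ := by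
  rw [← norm_conj (geomKernel L t), geomKernel, geomKernel, map_sum]
  simp_rw [conj_expTwoPi, mul_neg]

theorem norm_geomKernel_sq_mul_le (L : ℕ) (t : ℝ) :
    ‖geomKernel L t‖ ^ 2 * (t - round t) ^ 2 ≤ 1 / 4 := by
  have h1 : ‖geomKernel L t‖ * ‖expTwoPi t - 1‖ ≤ 2 := by
    rw [← norm_mul, geomKernel]
    simp_rw [expTwoPi_nat_mul]
    rw [geom_sum_mul]
    refine (norm_sub_le _ _).trans ?_
    rw [norm_pow, norm_expTwoPi]
    norm_num
  have h2 := mul_le_mul_of_nonneg_left (four_mul_abs_sub_round_le_norm_expTwoPi_sub_one t)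
    (norm_nonneg (geomKernel L t))
  have h3 : ‖geomKernel L t‖ * |t - round t| ≤ 1 / 2 := by linarith
  have h4 : 0 ≤ ‖geomKernel L t‖ * |t - round t| := by positivity
  calc _ = (‖geomKernel L t‖ * |t - round t|) ^ 2 := by rw [mul_pow, sq_abs]
    _ ≤ (1 / 2) ^ 2 := by gcongr
    _ = 1 / 4 := by norm_num

/-- A sum of values at `δ`-separated points `t i`, each at most `A` and at most `B / t i ^ 2`. -/
theorem sum_le_of_separated {ι : Type*} (S : Finset ι) (t F : ι → ℝ) {δ A B : ℝ}
    (hδ : 0 < δ) (hA : 0 ≤ A) (hB : 0 ≤ B)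
    (hsep : ∀ i ∈ S, ∀ j ∈ S, i ≠ j → δ ≤ |t i - t j|)
    (hFA : ∀ i ∈ S, F i ≤ A) (hFB : ∀ i ∈ S, F i * t i ^ 2 ≤ B) :
    ∑ i ∈ S, F i ≤ 2 * (A + 2 * B / δ ^ 2) := by
  set κ : ι → ℕ := fun i ↦ ⌊|t i| / δ⌋₊
  set g : ℕ → ℝ := fun k ↦ if k = 0 then A else B / δ ^ 2 * ((k : ℝ) ^ 2)⁻¹
  have hg0 : ∀ k, 0 ≤ g k := fun k ↦ by simp only [g]; split_ifs <;> positivity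
  have hκ : ∀ i, κ i * δ ≤ |t i| := fun i ↦
    (le_div_iff₀ hδ).mp (Nat.floor_le (by positivity))
  have hκ' : ∀ i, |t i| < (κ i + 1) * δ := fun i ↦
    (div_lt_iff₀ hδ).mp (Nat.lt_floor_add_one _)
  have hFg : ∀ i ∈ S, F i ≤ g (κ i) := by
    intro i hi
    simp only [g]
    split_ifs with h
    · exact hFA i hi
    · have hk : (0 : ℝ) < κ i := by exact_mod_cast Nat.pos_of_ne_zero h
      by_cases hF : F i ≤ 0
      · exact hF.trans (by positivity)
      · have h1 : (κ i * δ) ^ 2 ≤ t i ^ 2 := by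
          rw [← sq_abs (t i)]
          have := hκ i
          gcongr
        have h2 := mul_le_mul_of_nonneg_left h1 (not_le.mp hF).le
        have h3 := h2.trans (hFB i hi)
        rw [div_mul_eq_mul_div, ← div_eq_mul_inv, div_div, le_div_iff₀ (by positivity)]
        linarith [h3, mul_pow (κ i : ℝ) δ 2]
  set c : ι → Bool × ℕ := fun i ↦ (decide (0 ≤ t i), κ i)
  have hc : Set.InjOn c S := by
    intro i hi j hj hij
    by_contra hne
    have h1 := hsep i hi j hj hne
    simp only [c, Prod.mk.injEq, decide_eq_decide] at hij
    obtain ⟨hs, hk⟩ := hij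
    have hi1 := hκ i
    have hi2 := hκ' i
    have hj1 := hκ j
    have hj2 := hκ' j
    rw [hk] at hi1 hi2
    by_cases h0 : 0 ≤ t i
    · rw [abs_of_nonneg h0] at hi1 hi2
      rw [abs_of_nonneg (hs.mp h0)] at hj1 hj2
      exact absurd (abs_lt.mpr ⟨by linarith, by linarith⟩) (not_lt.mpr h1)
    · rw [abs_of_neg (not_le.mp h0)] at hi1 hi2
      rw [abs_of_neg (not_le.mp fun h ↦ h0 (hs.mpr h))] at hj1 hj2
      exact absurd (abs_lt.mpr ⟨by linarith, by linarith⟩) (not_lt.mpr h1)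
  set n := S.sup κ + 1
  calc ∑ i ∈ S, F i ≤ ∑ i ∈ S, g (κ i) := Finset.sum_le_sum hFg
    _ = ∑ p ∈ S.image c, g p.2 := by rw [Finset.sum_image hc]
    _ ≤ ∑ p ∈ (Finset.univ : Finset Bool) ×ˢ Finset.range n, g p.2 := by
        refine Finset.sum_le_sum_of_subset_of_nonneg ?_ fun _ _ _ ↦ hg0 _
        intro p hp
        obtain ⟨i, hi, rfl⟩ := Finset.mem_image.mp hp
        simpa [c, n, Nat.lt_succ_iff, le_or_gt] using Finset.le_sup (f := κ) hi
    _ = 2 * ∑ k ∈ Finset.range n, g k := by rw [Finset.sum_product]; simp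
    _ ≤ 2 * (A + 2 * B / δ ^ 2) := by
        gcongr
        have h1 : Finset.range n = insert 0 (Finset.Ioo 0 n) := by
          ext k
          simp only [Finset.mem_range, Finset.mem_insert, Finset.mem_Ioo]
          omega
        rw [h1, Finset.sum_insert (by simp)]
        have h2 : ∑ k ∈ Finset.Ioo 0 n, g k
            = B / δ ^ 2 * ∑ k ∈ Finset.Ioo 0 n, ((k : ℝ) ^ 2)⁻¹ := by
          rw [Finset.mul_sum]
          refine Finset.sum_congr rfl fun k hk ↦ ?_
          have : k ≠ 0 := by have := (Finset.mem_Ioo.mp hk).1; omega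
          simp [g, this]
        have h3 := sum_Ioo_inv_sq_le (α := ℝ) 0 n
        have h4 : B / δ ^ 2 * ∑ k ∈ Finset.Ioo 0 n, ((k : ℝ) ^ 2)⁻¹ ≤ B / δ ^ 2 * 2 := by
          gcongr
          simpa using h3
        have h5 : g 0 = A := by simp [g]
        rw [h2, h5]
        calc _ ≤ A + B / δ ^ 2 * 2 := by linarith
          _ = _ := by ring

variable {ι : Type*}

/-- The points `α i` are `δ`-separated modulo `1`. -/
def SeparatedModOne (S : Finset ι) (α : ι → ℝ) (δ : ℝ) : Prop :=
  ∀ i ∈ S, ∀ j ∈ S, i ≠ j → ∀ m : ℤ, δ ≤ |α i - α j - m|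

theorem SeparatedModOne.sum_norm_geomKernel_sq_le {S : Finset ι} {α : ι → ℝ} {δ : ℝ}
    (hδ : 0 < δ) (hS : SeparatedModOne S α δ) (L : ℕ) (β : ℝ) :
    ∑ i ∈ S, ‖geomKernel L (α i - β)‖ ^ 2 ≤ 2 * (L : ℝ) ^ 2 + 1 / δ ^ 2 := by
  refine (sum_le_of_separated S (fun i ↦ α i - β - round (α i - β)) _ hδ
    (A := (L : ℝ) ^ 2) (B := 1 / 4) (by positivity) (by norm_num) ?_ ?_ ?_).trans_eq ?_
  · intro i hi j hj hij
    have := hS i hi j hj hij (round (α i - β) - round (α j - β))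
    push_cast at this
    convert this using 2
    ring
  · intro i _
    have := norm_geomKernel_le L (α i - β)
    gcongr
  · exact fun i _ ↦ norm_geomKernel_sq_mul_le L _
  · ring

theorem sum_sum_norm_sq_eq (S : Finset ι) (α : ι → ℝ) (b : ι → ℂ) (L : ℕ) :
    ((∑ j ∈ Finset.range L, ∑ k ∈ Finset.range L,
      ‖∑ r ∈ S, b r * expTwoPi (((j : ℝ) - k) * α r)‖ ^ 2 : ℝ) : ℂ) =
    ∑ r ∈ S, ∑ s ∈ S, b r * conj (b s) * ((‖geomKernel L (α r - α s)‖ ^ 2 : ℝ) : ℂ) := by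
  have h1 : ∀ r s, b r * conj (b s) * ((‖geomKernel L (α r - α s)‖ ^ 2 : ℝ) : ℂ) =
      ∑ j ∈ Finset.range L, ∑ k ∈ Finset.range L,
        (b r * expTwoPi (((j : ℝ) - k) * α r)) *
          conj (b s * expTwoPi (((j : ℝ) - k) * α s)) := by
    intro r s
    rw [ofReal_pow, ← mul_conj', geomKernel, map_sum, Finset.sum_mul_sum, Finset.mul_sum]
    refine Finset.sum_congr rfl fun j _ ↦ ?_
    rw [Finset.mul_sum]
    refine Finset.sum_congr rfl fun k _ ↦ ?_
    rw [map_mul, conj_expTwoPi, conj_expTwoPi, ← expTwoPi_add,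
      mul_mul_mul_comm, ← expTwoPi_add]
    congr 2
    ring
  simp_rw [h1]
  push_cast
  simp_rw [← mul_conj', map_sum, Finset.sum_mul_sum]
  have h2 : ∀ f : ι → ℕ → ℕ → ℂ,
      ∑ s ∈ S, ∑ j ∈ Finset.range L, ∑ k ∈ Finset.range L, f s j k =
      ∑ j ∈ Finset.range L, ∑ k ∈ Finset.range L, ∑ s ∈ S, f s j k := by
    intro f
    rw [Finset.sum_comm]
    exact Finset.sum_congr rfl fun j _ ↦ Finset.sum_comm
  rw [Finset.sum_congr rfl fun r _ ↦ h2 _]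
  symm
  rw [Finset.sum_comm]
  exact Finset.sum_congr rfl fun j _ ↦ Finset.sum_comm

/-- The dual form of the additive large sieve. -/
theorem dual_large_sieve {S : Finset ι} {α : ι → ℝ} {δ : ℝ} (hδ : 0 < δ)
    (hS : SeparatedModOne S α δ) (b : ι → ℂ) (M : ℕ) :
    M * ∑ n ∈ Finset.range M, ‖∑ r ∈ S, b r * expTwoPi (n * α r)‖ ^ 2 ≤
      (8 * (M : ℝ) ^ 2 + 1 / δ ^ 2) * ∑ r ∈ S, ‖b r‖ ^ 2 := by
  set B : ℝ → ℝ := fun m ↦ ‖∑ r ∈ S, b r * expTwoPi (m * α r)‖ ^ 2 with hB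
  set w : ι → ι → ℝ := fun r s ↦ ‖geomKernel (2 * M) (α r - α s)‖ ^ 2 with hw
  set H : ℝ := 8 * (M : ℝ) ^ 2 + 1 / δ ^ 2 with hH
  have hwc : ∀ s, ∑ r ∈ S, w r s ≤ H := by
    intro s
    refine (hS.sum_norm_geomKernel_sq_le hδ (2 * M) (α s)).trans_eq ?_
    push_cast
    ring
  have hsymm : ∀ r s, w r s = w s r := by
    intro r s
    simp only [hw]
    rw [← norm_geomKernel_neg, neg_sub]
  have h1 : M * ∑ n ∈ Finset.range M, B n ≤
      ∑ j ∈ Finset.range (2 * M), ∑ k ∈ Finset.range (2 * M), B ((j : ℝ) - k) := by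
    have hinj : Set.InjOn (fun p : ℕ × ℕ ↦ (p.1 + p.2, p.2))
        (Finset.range M ×ˢ Finset.range M : Finset (ℕ × ℕ)) := by
      rintro ⟨a, b⟩ _ ⟨c, d⟩ _ h
      simp only [Prod.mk.injEq] at h
      ext <;> simp <;> omega
    calc M * ∑ n ∈ Finset.range M, B n
        = ∑ p ∈ Finset.range M ×ˢ Finset.range M, B (((p.1 + p.2 : ℕ) : ℝ) - (p.2 : ℕ)) := by
          rw [Finset.sum_product]
          simp [Finset.mul_sum]
      _ = ∑ p ∈ (Finset.range M ×ˢ Finset.range M).image (fun p : ℕ × ℕ ↦ (p.1 + p.2, p.2)),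
            B ((p.1 : ℝ) - p.2) := by rw [Finset.sum_image hinj]
      _ ≤ ∑ p ∈ Finset.range (2 * M) ×ˢ Finset.range (2 * M), B ((p.1 : ℝ) - p.2) := by
          refine Finset.sum_le_sum_of_subset_of_nonneg ?_ fun _ _ _ ↦ sq_nonneg _
          intro p hp
          simp only [Finset.mem_image, Finset.mem_product, Finset.mem_range] at hp ⊢
          obtain ⟨a, ha, rfl⟩ := hp
          constructor <;> simp <;> omega
      _ = _ := by rw [Finset.sum_product]
  refine h1.trans ?_
  have h2 := sum_sum_norm_sq_eq S α b (2 * M)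
  calc ∑ j ∈ Finset.range (2 * M), ∑ k ∈ Finset.range (2 * M), B ((j : ℝ) - k)
      ≤ ‖((∑ j ∈ Finset.range (2 * M), ∑ k ∈ Finset.range (2 * M),
          B ((j : ℝ) - k) : ℝ) : ℂ)‖ := by
        rw [norm_real]
        exact le_abs_self _
    _ ≤ ∑ r ∈ S, ∑ s ∈ S, ‖b r‖ * ‖b s‖ * w r s := by
        rw [h2]
        refine (norm_sum_le _ _).trans (Finset.sum_le_sum fun r _ ↦ ?_)
        refine (norm_sum_le _ _).trans (Finset.sum_le_sum fun s _ ↦ ?_)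
        rw [norm_mul, norm_mul, norm_conj, norm_real, Real.norm_of_nonneg (sq_nonneg _)]
    _ ≤ ∑ r ∈ S, ∑ s ∈ S, (‖b r‖ ^ 2 * w s r / 2 + ‖b s‖ ^ 2 * w r s / 2) := by
        refine Finset.sum_le_sum fun r _ ↦ Finset.sum_le_sum fun s _ ↦ ?_
        rw [hsymm s r]
        have : 0 ≤ w r s := sq_nonneg _
        nlinarith [mul_nonneg this (sq_nonneg (‖b r‖ - ‖b s‖))]
    _ = ∑ r ∈ S, ‖b r‖ ^ 2 * ∑ s ∈ S, w s r := by
        simp_rw [Finset.sum_add_distrib]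
        rw [Finset.sum_comm (f := fun r s ↦ ‖b s‖ ^ 2 * w r s / 2), ← Finset.sum_add_distrib]
        refine Finset.sum_congr rfl fun r _ ↦ ?_
        rw [← Finset.sum_add_distrib, Finset.mul_sum]
        exact Finset.sum_congr rfl fun s _ ↦ by ring
    _ ≤ ∑ r ∈ S, ‖b r‖ ^ 2 * H := by
        gcongr with r _
        exact hwc r
    _ = H * ∑ r ∈ S, ‖b r‖ ^ 2 := by rw [← Finset.sum_mul, mul_comm]

/-- The duality principle for bilinear forms. -/
theorem sum_norm_sq_le_of_dual {κ : Type*} (S : Finset ι) (T : Finset κ) (c : κ → ι → ℂ) {H : ℝ}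
    (hH0 : 0 ≤ H)
    (hH : ∀ b : ι → ℂ, ∑ n ∈ T, ‖∑ r ∈ S, b r * c n r‖ ^ 2 ≤ H * ∑ r ∈ S, ‖b r‖ ^ 2)
    (a : κ → ℂ) :
    ∑ r ∈ S, ‖∑ n ∈ T, a n * c n r‖ ^ 2 ≤ H * ∑ n ∈ T, ‖a n‖ ^ 2 := by
  set s : ι → ℂ := fun r ↦ ∑ n ∈ T, a n * c n r with hs
  set X := ∑ r ∈ S, ‖s r‖ ^ 2 with hX
  set d : κ → ℂ := fun n ↦ ∑ r ∈ S, conj (s r) * c n r with hd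
  have hX0 : 0 ≤ X := by positivity
  have hA0 : 0 ≤ ∑ n ∈ T, ‖a n‖ ^ 2 := by positivity
  have h1 : (X : ℂ) = ∑ n ∈ T, a n * d n := by
    simp only [hX, hd, Finset.mul_sum]
    rw [Finset.sum_comm]
    push_cast
    refine Finset.sum_congr rfl fun r _ ↦ ?_
    rw [← mul_conj', hs, Finset.sum_mul]
    exact Finset.sum_congr rfl fun n _ ↦ by ring
  have h2 : X ≤ ∑ n ∈ T, ‖a n‖ * ‖d n‖ := by
    calc X ≤ ‖(X : ℂ)‖ := by rw [norm_real]; exact le_abs_self _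
      _ ≤ _ := by
        rw [h1]
        refine (norm_sum_le _ _).trans_eq (Finset.sum_congr rfl fun n _ ↦ norm_mul _ _)
  have h3 : X ^ 2 ≤ (∑ n ∈ T, ‖a n‖ ^ 2) * ∑ n ∈ T, ‖d n‖ ^ 2 :=
    (pow_le_pow_left₀ hX0 h2 2).trans (Finset.sum_mul_sq_le_sq_mul_sq _ _ _)
  have h4 : ∑ n ∈ T, ‖d n‖ ^ 2 ≤ H * X := by
    simpa [hd, hX] using hH fun r ↦ conj (s r)
  rcases hX0.eq_or_lt with h0 | h0
  · rw [← h0]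
    positivity
  · have h5 : X * X ≤ (H * ∑ n ∈ T, ‖a n‖ ^ 2) * X := by
      calc X * X = X ^ 2 := (sq X).symm
        _ ≤ _ := h3
        _ ≤ (∑ n ∈ T, ‖a n‖ ^ 2) * (H * X) := by gcongr
        _ = _ := by ring
    exact le_of_mul_le_mul_right h5 h0

/-- The additive large sieve for `R⁻²`-separated points. -/
theorem additive_large_sieve {S : Finset ι} {α : ι → ℝ} {R : ℕ} (hR : R ≠ 0)
    (hS : SeparatedModOne S α (1 / (R : ℝ) ^ 2)) (N : ℕ) (a : ℕ → ℂ) :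
    ∑ r ∈ S, ‖∑ n ∈ Finset.range N, a n * expTwoPi (n * α r)‖ ^ 2 ≤
      9 * ((N : ℝ) + (R : ℝ) ^ 2) * ∑ n ∈ Finset.range N, ‖a n‖ ^ 2 := by
  refine sum_norm_sq_le_of_dual S (Finset.range N) (fun n r ↦ expTwoPi (n * α r))
    (by positivity) (fun b ↦ ?_) a
  set M : ℕ := N + R ^ 2
  have hR' : (0 : ℝ) < R := by exact_mod_cast Nat.pos_of_ne_zero hR
  have hMR : (R : ℝ) ^ 2 ≤ M := by simp [M]
  have hM0 : (0 : ℝ) < M := lt_of_lt_of_le (by positivity) hMR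
  have h := dual_large_sieve (by positivity) hS b M
  have hsub : ∑ n ∈ Finset.range N, ‖∑ r ∈ S, b r * expTwoPi (n * α r)‖ ^ 2 ≤
      ∑ n ∈ Finset.range M, ‖∑ r ∈ S, b r * expTwoPi (n * α r)‖ ^ 2 :=
    Finset.sum_le_sum_of_subset_of_nonneg
      (Finset.range_mono (Nat.le_add_right _ _)) fun _ _ _ ↦ sq_nonneg _
  have hH : 8 * (M : ℝ) ^ 2 + 1 / (1 / (R : ℝ) ^ 2) ^ 2 ≤ M * (9 * M) := by
    have : 1 / (1 / (R : ℝ) ^ 2) ^ 2 = ((R : ℝ) ^ 2) ^ 2 := by field_simp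
    rw [this]
    nlinarith [pow_le_pow_left₀ (by positivity) hMR 2]
  have h2 : (M : ℝ) * ∑ n ∈ Finset.range M, ‖∑ r ∈ S, b r * expTwoPi (n * α r)‖ ^ 2 ≤
      M * (9 * M * ∑ r ∈ S, ‖b r‖ ^ 2) := by
    refine h.trans ?_
    rw [← mul_assoc]
    gcongr
  refine hsub.trans ((le_of_mul_le_mul_left h2 hM0).trans_eq ?_)
  simp [M]

/-- The reduced fractions with denominators in a given finite set, as pairs
(denominator, numerator). -/
def reducedFractions (D : Finset ℕ) : Finset (Σ _ : ℕ, ℕ) :=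
  D.sigma fun q ↦ (Finset.range q).filter fun a ↦ a.Coprime q

theorem separatedModOne_reducedFractions (D : Finset ℕ) {R : ℕ} (hD : ∀ q ∈ D, q ≤ R) :
    SeparatedModOne (reducedFractions D) (fun p ↦ (p.2 : ℝ) / p.1) (1 / (R : ℝ) ^ 2) := by
  rintro ⟨q, a⟩ hp ⟨q', a'⟩ hp' hne m
  simp only [reducedFractions, Finset.mem_sigma, Finset.mem_filter, Finset.mem_range] at hp hp'
  obtain ⟨hq, haq, hcop⟩ := hp
  obtain ⟨hq', haq', hcop'⟩ := hp'
  have hq0 : (0 : ℝ) < q := by exact_mod_cast Nat.zero_lt_of_lt haq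
  have hq0' : (0 : ℝ) < q' := by exact_mod_cast Nat.zero_lt_of_lt haq'
  set z : ℤ := a * q' - a' * q - m * q * q' with hz
  have hz0 : z ≠ 0 := by
    intro h0
    have e1 : (a : ℤ) * q' = q * (a' + m * q') := by linarith
    have e2 : (a' : ℤ) * q = q' * (a - m * q) := by linarith
    have d1 : q ∣ q' := by
      have : (q : ℤ) ∣ a * q' := ⟨_, e1⟩
      have : q ∣ a * q' := by exact_mod_cast this
      exact hcop.symm.dvd_of_dvd_mul_left this
    have d2 : q' ∣ q := by
      have : (q' : ℤ) ∣ a' * q := ⟨_, e2⟩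
      have : q' ∣ a' * q := by exact_mod_cast this
      exact hcop'.symm.dvd_of_dvd_mul_left this
    obtain rfl := Nat.dvd_antisymm d1 d2
    have hqz : (q : ℤ) ≠ 0 := by exact_mod_cast hq0.ne'
    have e3 : (a : ℤ) = a' + m * q := by
      apply mul_right_cancel₀ hqz
      linarith
    have e4 : a = a' := by
      have h5 : a ≡ a' [MOD q] := by
        rw [← Int.natCast_modEq_iff, e3]
        simp [Int.ModEq]
      exact Nat.ModEq.eq_of_lt_of_lt h5 haq haq'
    exact hne (by rw [e4])
  have hz1 : (1 : ℝ) ≤ |(z : ℝ)| := by exact_mod_cast Int.one_le_abs hz0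
  have heq : (a : ℝ) / q - (a' : ℝ) / q' - m = z / (q * q') := by
    rw [hz]
    push_cast
    field_simp
  have hqR : (q : ℝ) ≤ R := by exact_mod_cast hD q hq
  have hqR' : (q' : ℝ) ≤ R := by exact_mod_cast hD q' hq'
  change 1 / (R : ℝ) ^ 2 ≤ |(a : ℝ) / q - (a' : ℝ) / q' - m|
  rw [heq, abs_div, abs_of_pos (by positivity : (0 : ℝ) < q * q'), sq]
  gcongr

section Multiplicative

variable {q : ℕ}

theorem conj_dirichletCharacter_apply (χ : DirichletCharacter ℂ q) (a : ZMod q) :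
    conj (χ a) = χ⁻¹ a := MulChar.star_apply' χ a

variable [NeZero q]

theorem norm_gaussSum_sq {χ : DirichletCharacter ℂ q} (hχ : χ.IsPrimitive) :
    ‖gaussSum χ (ZMod.stdAddChar (N := q))‖ ^ 2 = q := by
  set e := ZMod.stdAddChar (N := q)
  have he : ∀ a, conj (e a) = e (-a) := fun a ↦ by
    rw [AddChar.map_neg_eq_conj]
  have h : ((‖gaussSum χ e‖ ^ 2 : ℝ) : ℂ) = q := by
    calc ((‖gaussSum χ e‖ ^ 2 : ℝ) : ℂ) = conj (gaussSum χ e) * gaussSum χ e := by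
          rw [ofReal_pow, conj_mul']
      _ = ∑ a, e (-a) * gaussSum χ (e.mulShift a) := by
          conv_lhs => rw [gaussSum, map_sum, ← gaussSum, Finset.sum_mul]
          refine Finset.sum_congr rfl fun a _ ↦ ?_
          rw [gaussSum_mulShift_of_isPrimitive e hχ, map_mul, he,
            conj_dirichletCharacter_apply]
          ring
      _ = ∑ b, χ b * ∑ a, e (a * (b - 1)) := by
          simp_rw [gaussSum, Finset.mul_sum]
          rw [Finset.sum_comm]
          refine Finset.sum_congr rfl fun b _ ↦ Finset.sum_congr rfl fun a _ ↦ ?_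
          rw [AddChar.mulShift_apply, mul_left_comm, ← AddChar.map_add_eq_mul]
          ring_nf
      _ = q := by
          have hsum : ∀ b : ZMod q, ∑ a, e (a * (b - 1)) = if b = 1 then (q : ℂ) else 0 := by
            intro b
            rw [AddChar.sum_mulShift _ (ZMod.isPrimitive_stdAddChar q), ZMod.card]
            simp only [sub_eq_zero]
            split_ifs <;> simp
          simp [hsum]
  exact_mod_cast h

theorem sum_norm_sum_character_sq (F : ZMod q → ℂ) :
    ∑ χ : DirichletCharacter ℂ q, ‖∑ a, χ⁻¹ a * F a‖ ^ 2 =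
      q.totient * ∑ a : (ZMod q)ˣ, ‖F a‖ ^ 2 := by
  have hunits : ∀ χ : DirichletCharacter ℂ q,
      ∑ a, χ⁻¹ a * F a = ∑ a : (ZMod q)ˣ, χ⁻¹ (a : ZMod q) * F a := by
    intro χ
    symm
    refine Finset.sum_of_injOn (fun a : (ZMod q)ˣ ↦ (a : ZMod q)) Units.val_injective.injOn
      (by simp) ?_ (by simp)
    intro a _ ha
    have : ¬IsUnit a := fun h ↦ ha ⟨h.unit, by simp⟩
    rw [MulChar.map_nonunit _ this, zero_mul]
  have h : ((∑ χ : DirichletCharacter ℂ q, ‖∑ a, χ⁻¹ a * F a‖ ^ 2 : ℝ) : ℂ) =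
      ((q.totient * ∑ a : (ZMod q)ˣ, ‖F a‖ ^ 2 : ℝ) : ℂ) := by
    push_cast
    simp_rw [hunits, ← mul_conj', map_sum, Finset.sum_mul_sum]
    rw [Finset.sum_comm, Finset.mul_sum]
    refine Finset.sum_congr rfl fun a _ ↦ ?_
    rw [Finset.sum_comm]
    have h1 : ∀ b : (ZMod q)ˣ, ∑ χ : DirichletCharacter ℂ q,
        χ⁻¹ (a : ZMod q) * F a * conj (χ⁻¹ (b : ZMod q) * F b) =
        if a = b then (q.totient : ℂ) * (F a * conj (F b)) else 0 := by
      intro b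
      have h2 : ∀ χ : DirichletCharacter ℂ q,
          χ⁻¹ (a : ZMod q) * F a * conj (χ⁻¹ (b : ZMod q) * F b) =
          (χ (a : ZMod q)⁻¹ * χ (b : ZMod q)) * (F a * conj (F b)) := by
        intro χ
        rw [map_mul, conj_dirichletCharacter_apply, inv_inv, MulChar.inv_apply,
          Ring.inverse_unit, ZMod.inv_coe_unit]
        ring
      simp_rw [h2]
      rw [← Finset.sum_mul, DirichletCharacter.sum_char_inv_mul_char_eq ℂ a.isUnit]
      simp only [Units.val_inj, ite_mul, zero_mul]
    simp_rw [h1]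
    simp
  exact_mod_cast h

theorem sum_primitive_norm_sq_le (N : ℕ) (c : ℕ → ℂ) :
    ∑ χ : DirichletCharacter ℂ q with χ.IsPrimitive,
        ‖∑ n ∈ Finset.range N, c n * χ (n : ZMod q)‖ ^ 2 ≤
      q.totient / q * ∑ a ∈ (Finset.range q).filter (fun a ↦ a.Coprime q),
        ‖∑ n ∈ Finset.range N, c n * expTwoPi (n * ((a : ℝ) / q))‖ ^ 2 := by
  set e := ZMod.stdAddChar (N := q)
  set F : ZMod q → ℂ := fun a ↦ ∑ n ∈ Finset.range N, c n * e (n * a)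
  have hq : (0 : ℝ) < q := by exact_mod_cast NeZero.pos q
  have h1 : ∀ χ : DirichletCharacter ℂ q, χ.IsPrimitive →
      q * ‖∑ n ∈ Finset.range N, c n * χ (n : ZMod q)‖ ^ 2 = ‖∑ a, χ⁻¹ a * F a‖ ^ 2 := by
    intro χ hχ
    have hχ' : (χ⁻¹).IsPrimitive := by
      rw [DirichletCharacter.isPrimitive_def, DirichletCharacter.conductor_inv]
      exact hχ
    rw [← norm_gaussSum_sq hχ', ← mul_pow, ← norm_mul]
    congr 2
    simp only [F, Finset.mul_sum]
    rw [Finset.sum_comm]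
    refine Finset.sum_congr rfl fun n _ ↦ ?_
    have := gaussSum_mulShift_of_isPrimitive e hχ' (n : ZMod q)
    rw [inv_inv] at this
    rw [mul_left_comm, mul_comm (gaussSum _ _), ← this, gaussSum, Finset.mul_sum]
    refine Finset.sum_congr rfl fun a _ ↦ ?_
    rw [AddChar.mulShift_apply]
    ring
  have h2 : ∑ a : (ZMod q)ˣ, ‖F a‖ ^ 2 =
      ∑ a ∈ (Finset.range q).filter (fun a ↦ a.Coprime q),
        ‖∑ n ∈ Finset.range N, c n * expTwoPi (n * ((a : ℝ) / q))‖ ^ 2 := by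
    refine Finset.sum_bij (fun a _ ↦ (a : ZMod q).val) ?_ ?_ ?_ ?_
    · intro a _
      simpa [ZMod.val_lt] using ZMod.val_coe_unit_coprime a
    · intro a _ b _ hab
      exact Units.ext (ZMod.val_injective q hab)
    · intro b hb
      simp only [Finset.mem_filter, Finset.mem_range] at hb
      exact ⟨ZMod.unitOfCoprime b hb.2, Finset.mem_univ _, by simp [ZMod.val_cast_of_lt hb.1]⟩
    · intro a _
      congr 2
      refine Finset.sum_congr rfl fun n _ ↦ ?_
      congr 1
      have h3 : ((n : ZMod q) * a) = ((n * (a : ZMod q).val : ℤ) : ZMod q) := by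
        simp
      rw [h3, ZMod.stdAddChar_coe, expTwoPi]
      congr 1
      push_cast
      ring
  rw [← h2, div_mul_eq_mul_div, le_div_iff₀ hq, ← sum_norm_sum_character_sq, mul_comm,
    Finset.mul_sum]
  calc _ = ∑ χ : DirichletCharacter ℂ q with χ.IsPrimitive, ‖∑ a, χ⁻¹ a * F a‖ ^ 2 :=
        Finset.sum_congr rfl fun χ hχ ↦ h1 χ (Finset.mem_filter.mp hχ).2
    _ ≤ _ := Finset.sum_le_sum_of_subset_of_nonneg (Finset.filter_subset _ _)
        fun _ _ _ ↦ sq_nonneg _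

end Multiplicative

/-- The multiplicative large sieve. -/
theorem multiplicative_large_sieve (D : Finset ℕ) {R : ℕ} (hR : R ≠ 0)
    (hD : ∀ q ∈ D, q ≠ 0 ∧ q ≤ R) (N : ℕ) (c : ℕ → ℂ) :
    ∑ q ∈ D, (q / q.totient : ℝ) * ∑ χ : DirichletCharacter ℂ q with χ.IsPrimitive,
        ‖∑ n ∈ Finset.range N, c n * χ (n : ZMod q)‖ ^ 2 ≤
      9 * ((N : ℝ) + (R : ℝ) ^ 2) * ∑ n ∈ Finset.range N, ‖c n‖ ^ 2 := by
  refine le_trans ?_ (additive_large_sieve hR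
    (separatedModOne_reducedFractions D fun q hq ↦ (hD q hq).2) N c)
  rw [reducedFractions, Finset.sum_sigma]
  refine Finset.sum_le_sum fun q hq ↦ ?_
  have : NeZero q := ⟨(hD q hq).1⟩
  have hq0 : (0 : ℝ) < q := by exact_mod_cast NeZero.pos q
  have hφ : (0 : ℝ) < q.totient := by exact_mod_cast Nat.totient_pos.mpr (NeZero.pos q)
  refine (mul_le_mul_of_nonneg_left (sum_primitive_norm_sq_le N c) (by positivity)).trans_eq ?_
  rw [← mul_assoc, div_mul_div_cancel₀ hφ.ne', div_self hq0.ne', one_mul]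

end LargeSieve

section Coefficients

variable (K : Type*) [Field K] [NumberField K]

/-- The sum of `LambdaK` over the ideals of norm `n`. -/
noncomputable def normCoeff (n : ℕ) : ℝ :=
  ∑ 𝔞 ∈ (finite_setOfPred_absNorm_eq (S := 𝓞 K) n).toFinset, LambdaK K 𝔞

variable {K}

theorem LambdaK_nonneg (𝔞 : Ideal (𝓞 K)) : 0 ≤ LambdaK K 𝔞 := by
  rw [LambdaK]
  split_ifs
  · exact Real.log_natCast_nonneg _
  · rfl

theorem IsPrimeIdealPower.radical_isPrime {𝔞 : Ideal (𝓞 K)} (h : IsPrimeIdealPower 𝔞) :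
    𝔞.radical.IsPrime ∧ 𝔞.radical ≠ ⊥ ∧ ∃ m, 1 ≤ m ∧ 𝔞 = 𝔞.radical ^ m := by
  obtain ⟨𝔭, m, hp, h0, hm, rfl⟩ := h
  rw [Ideal.radical_pow _ (by omega), hp.radical]
  exact ⟨hp, h0, m, hm, rfl⟩

theorem isPrimePow_absNorm {𝔭 : Ideal (𝓞 K)} (hp : 𝔭.IsPrime) (h0 : 𝔭 ≠ ⊥) :
    IsPrimePow (absNorm 𝔭) := by
  have : 𝔭.IsMaximal := hp.isMaximal h0
  let := Ideal.Quotient.field 𝔭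
  have := Ideal.finiteQuotientOfFreeOfNeBot 𝔭 h0
  have := Fintype.ofFinite (𝓞 K ⧸ 𝔭)
  have h := Fintype.isPrimePow_card_of_field (α := 𝓞 K ⧸ 𝔭)
  rwa [← Nat.card_eq_fintype_card] at h

theorem IsPrimeIdealPower.isPrimePow_absNorm {𝔞 : Ideal (𝓞 K)} (h : IsPrimeIdealPower 𝔞) :
    IsPrimePow (absNorm 𝔞) := by
  obtain ⟨𝔭, m, hp, h0, hm, rfl⟩ := h
  rw [map_pow]
  exact (_root_.isPrimePow_absNorm hp h0).pow (by omega)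

theorem absNorm_span_natCast_eq (p : ℕ) :
    absNorm (Ideal.span {(p : 𝓞 K)}) = p ^ Module.finrank ℚ K := by
  rw [absNorm_span_singleton, ← map_natCast (algebraMap ℤ (𝓞 K)), Algebra.norm_algebraMap,
    RingOfIntegers.rank, Int.natAbs_pow, Int.natAbs_natCast]

variable (K) in
theorem normCoeff_nonneg (n : ℕ) : 0 ≤ normCoeff K n :=
  Finset.sum_nonneg fun 𝔞 _ ↦ LambdaK_nonneg 𝔞

variable (K) in
theorem normCoeff_le (n : ℕ) :
    normCoeff K n ≤ Module.finrank ℚ K * ArithmeticFunction.vonMangoldt n := by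
  set A := ((finite_setOfPred_absNorm_eq (S := 𝓞 K) n).toFinset).filter
    IsPrimeIdealPower with hA
  have hmem : ∀ 𝔞 ∈ A, absNorm 𝔞 = n ∧ IsPrimeIdealPower 𝔞 := by
    intro 𝔞 h
    simpa [hA] using h
  have hsum : normCoeff K n = ∑ 𝔞 ∈ A, Real.log (absNorm 𝔞.radical) := by
    rw [normCoeff, hA, Finset.sum_filter]
    rfl
  rw [hsum]
  rcases A.eq_empty_or_nonempty with h | ⟨𝔞₀, h₀⟩
  · rw [h, Finset.sum_empty]
    exact mul_nonneg (Nat.cast_nonneg _) ArithmeticFunction.vonMangoldt_nonneg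
  have hn : IsPrimePow n := (hmem _ h₀).1 ▸ (hmem _ h₀).2.isPrimePow_absNorm
  set p := n.minFac
  have hp : p.Prime := Nat.minFac_prime hn.ne_one
  rw [ArithmeticFunction.vonMangoldt_apply, if_pos hn]
  have hinj : Set.InjOn Ideal.radical (A : Set (Ideal (𝓞 K))) := by
    intro 𝔞 ha 𝔟 hb hab
    obtain ⟨hna, ha'⟩ := hmem _ ha
    obtain ⟨hnb, hb'⟩ := hmem _ hb
    obtain ⟨hp1, hp0, m, -, hm⟩ := ha'.radical_isPrime
    obtain ⟨-, -, m', -, hm'⟩ := hb'.radical_isPrime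
    rw [← hab] at hm'
    have h1 : 1 < absNorm 𝔞.radical := (_root_.isPrimePow_absNorm hp1 hp0).one_lt
    have h2 : absNorm 𝔞.radical ^ m = absNorm 𝔞.radical ^ m' := by
      rw [← map_pow, ← map_pow, ← hm, ← hm', hna, hnb]
    rw [hm, hm', Nat.pow_right_injective h1 h2]
  have hdvd : ∏ 𝔭 ∈ A.image Ideal.radical, 𝔭 ∣ Ideal.span {(p : 𝓞 K)} := by
    refine Finset.prod_primes_dvd _ ?_ ?_
    · intro 𝔭 h
      obtain ⟨𝔞, ha, rfl⟩ := Finset.mem_image.mp h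
      obtain ⟨hp1, hp0, -⟩ := (hmem _ ha).2.radical_isPrime
      exact Ideal.prime_of_isPrime hp0 hp1
    · intro 𝔭 h
      obtain ⟨𝔞, ha, rfl⟩ := Finset.mem_image.mp h
      obtain ⟨hp1, hp0, -⟩ := (hmem _ ha).2.radical_isPrime
      rw [Ideal.dvd_span_singleton]
      refine hp1.mem_of_pow_mem (n.factorization p) ?_
      have h1 : ((absNorm 𝔞 : ℕ) : 𝓞 K) ∈ 𝔞.radical := Ideal.le_radical (Ideal.absNorm_mem 𝔞)
      rw [(hmem _ ha).1, ← hn.minFac_pow_factorization_eq] at h1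
      exact_mod_cast h1
  have hnorm := map_dvd absNorm hdvd
  rw [absNorm_span_natCast_eq, map_prod] at hnorm
  have hle := Nat.le_of_dvd (pow_pos hp.pos _) hnorm
  have hpos : ∀ 𝔭 ∈ A.image Ideal.radical, (absNorm 𝔭 : ℝ) ≠ 0 := by
    intro 𝔭 h
    obtain ⟨𝔞, ha, rfl⟩ := Finset.mem_image.mp h
    obtain ⟨hp1, hp0, -⟩ := (hmem _ ha).2.radical_isPrime
    exact_mod_cast (_root_.isPrimePow_absNorm hp1 hp0).ne_zero
  calc ∑ 𝔞 ∈ A, Real.log (absNorm 𝔞.radical)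
      = ∑ 𝔭 ∈ A.image Ideal.radical, Real.log (absNorm 𝔭) := by rw [Finset.sum_image hinj]
    _ = Real.log (∏ 𝔭 ∈ A.image Ideal.radical, (absNorm 𝔭 : ℝ)) := (Real.log_prod hpos).symm
    _ ≤ Real.log ((p : ℝ) ^ Module.finrank ℚ K) := by
        apply Real.log_le_log
        · exact lt_of_le_of_ne (Finset.prod_nonneg fun _ _ ↦ Nat.cast_nonneg _)
            (Finset.prod_ne_zero_iff.mpr hpos).symm
        · exact_mod_cast hle
    _ = _ := Real.log_pow _ _

variable (K) in
theorem sum_normCoeff_sq_le {x : ℝ} (hx : 1 ≤ x) :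
    ∑ n ∈ Finset.range (⌊x⌋₊ + 1), normCoeff K n ^ 2 ≤
      (Module.finrank ℚ K : ℝ) ^ 2 * (Real.log 4 + 4) * (x * Real.log x) := by
  have hlog : 0 ≤ Real.log x := Real.log_nonneg hx
  set d : ℝ := (Module.finrank ℚ K : ℝ)
  calc ∑ n ∈ Finset.range (⌊x⌋₊ + 1), normCoeff K n ^ 2
      ≤ ∑ n ∈ Finset.range (⌊x⌋₊ + 1),
          d ^ 2 * Real.log x * ArithmeticFunction.vonMangoldt n := by
        refine Finset.sum_le_sum fun n hn ↦ ?_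
        have h0 : 0 ≤ ArithmeticFunction.vonMangoldt n := ArithmeticFunction.vonMangoldt_nonneg
        have h1 : ArithmeticFunction.vonMangoldt n ≤ Real.log x := by
          rcases Nat.eq_zero_or_pos n with rfl | hpos
          · simpa using hlog
          · refine ArithmeticFunction.vonMangoldt_le_log.trans
              (Real.log_le_log (by exact_mod_cast hpos) ?_)
            rw [Finset.mem_range, Nat.lt_succ_iff] at hn
            exact (Nat.le_floor_iff (by linarith)).mp hn
        calc normCoeff K n ^ 2 ≤ (d * ArithmeticFunction.vonMangoldt n) ^ 2 :=
              pow_le_pow_left₀ (normCoeff_nonneg K n) (normCoeff_le K n) 2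
          _ = d ^ 2 * ArithmeticFunction.vonMangoldt n * ArithmeticFunction.vonMangoldt n := by
              ring
          _ ≤ _ := by gcongr
    _ = d ^ 2 * Real.log x * Chebyshev.psi x := by
        rw [← Finset.mul_sum, Chebyshev.psi_eq_sum_Icc, Finset.range_eq_Ico]
        rfl
    _ ≤ d ^ 2 * Real.log x * ((Real.log 4 + 4) * x) := by
        gcongr
        exact Chebyshev.psi_le_const_mul_self (by linarith)
    _ = _ := by ring

theorem psiKChi_eq_sum {x : ℝ} (hx : 0 ≤ x) {q : ℕ} (χ : DirichletCharacter ℂ q) :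
    psiKChi K x χ =
      ∑ n ∈ Finset.range (⌊x⌋₊ + 1), (normCoeff K n : ℂ) * χ (n : ZMod q) := by
  set A := (finite_setOfPred_absNorm_le (S := 𝓞 K) ⌊x⌋₊).toFinset with hA
  have hmem : ∀ 𝔞, 𝔞 ∈ A ↔ absNorm 𝔞 ≤ ⌊x⌋₊ := by simp [hA]
  rw [psiKChi, tsum_eq_sum (s := A) fun 𝔞 h ↦ if_neg fun h' ↦
    h ((hmem _).mpr (Nat.le_floor h')),
    ← Finset.sum_fiberwise_of_maps_to (g := fun 𝔞 ↦ absNorm 𝔞)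
      (t := Finset.range (⌊x⌋₊ + 1)) fun 𝔞 h ↦ by simpa [Nat.lt_succ_iff] using (hmem _).mp h]
  refine Finset.sum_congr rfl fun n hn ↦ ?_
  rw [Finset.mem_range, Nat.lt_succ_iff] at hn
  have hfib : A.filter (fun 𝔞 ↦ absNorm 𝔞 = n) =
      (finite_setOfPred_absNorm_eq (S := 𝓞 K) n).toFinset := by
    ext 𝔞
    simp only [Finset.mem_filter, hmem, Set.Finite.mem_toFinset, Set.mem_ofPred_eq]
    exact ⟨fun h ↦ h.2, fun h ↦ ⟨h ▸ hn, h⟩⟩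
  rw [hfib, normCoeff]
  push_cast
  rw [Finset.sum_mul]
  refine Finset.sum_congr rfl fun 𝔞 h ↦ ?_
  have h' : absNorm 𝔞 = n := by simpa using h
  rw [h', if_pos ((Nat.le_floor_iff hx).mp hn), mul_comm]

end Coefficients

theorem card_dirichletCharacter_eq_totient (q : ℕ) [NeZero q] :
    Fintype.card (DirichletCharacter ℂ q) = q.totient := by
  rw [← Nat.card_eq_fintype_card]
  exact DirichletCharacter.card_eq_totient_of_hasEnoughRootsOfUnity ℂ q

theorem sum_primitive_norm_psiKChi'_sq_le (K : Type*) [Field K] [NumberField K] {B : ℕ}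
    (hB : ∀ q : ℕ, q ≠ 0 → (∃ χ : DirichletCharacter ℂ q, χ.IsPrimitive ∧
      ∀ a ∈ Gq K q, χ (a : ZMod q) = 1) → q ≤ B) (x : ℝ) (q : ℕ) [NeZero q] :
    ∑ χ : DirichletCharacter ℂ q with χ.IsPrimitive, ‖psiKChi' K x χ‖ ^ 2 ≤
      2 * ∑ χ : DirichletCharacter ℂ q with χ.IsPrimitive, ‖psiKChi K x χ‖ ^ 2 +
        q.totient * (if q ≤ B then 2 * x ^ 2 else 0) := by
  set E : ℝ := if q ≤ B then 2 * x ^ 2 else 0 with hE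
  have hE0 : 0 ≤ E := by rw [hE]; split_ifs <;> positivity
  have hterm : ∀ χ : DirichletCharacter ℂ q, χ.IsPrimitive →
      ‖psiKChi' K x χ‖ ^ 2 ≤ 2 * ‖psiKChi K x χ‖ ^ 2 + E := by
    intro χ hχ
    rw [psiKChi']
    split_ifs with htriv
    · rw [hE, if_pos (hB q (NeZero.ne q) ⟨χ, hχ, htriv⟩)]
      have h1 := norm_sub_le (psiKChi K x χ) (x : ℂ)
      rw [Complex.norm_real, Real.norm_eq_abs] at h1
      have h2 := pow_le_pow_left₀ (norm_nonneg _) h1 2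
      nlinarith [sq_nonneg (‖psiKChi K x χ‖ - |x|), sq_abs x]
    · nlinarith [sq_nonneg ‖psiKChi K x χ‖]
  calc _ ≤ ∑ χ : DirichletCharacter ℂ q with χ.IsPrimitive, (2 * ‖psiKChi K x χ‖ ^ 2 + E) :=
        Finset.sum_le_sum fun χ hχ ↦ hterm χ (Finset.mem_filter.mp hχ).2
    _ ≤ _ := by
        rw [Finset.sum_add_distrib, ← Finset.mul_sum, Finset.sum_const, nsmul_eq_mul]
        gcongr
        rw [← card_dirichletCharacter_eq_totient]
        exact Finset.card_le_univ _

theorem sum_Ioc_ite_le {U X : ℝ} (hU : 0 < U) (hX : 0 ≤ X) (B R : ℕ) :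
    ∑ q ∈ Finset.Ioc ⌊U⌋₊ R, (if q ≤ B then X else 0) ≤ X * (B : ℝ) ^ 2 / U := by
  rw [← Finset.sum_filter, Finset.sum_const, nsmul_eq_mul]
  set T := (Finset.Ioc ⌊U⌋₊ R).filter (· ≤ B)
  rcases T.eq_empty_or_nonempty with h | ⟨q, hq⟩
  · rw [h]
    simp only [Finset.card_empty, Nat.cast_zero, zero_mul]
    positivity
  · simp only [T, Finset.mem_filter, Finset.mem_Ioc] at hq
    have hUB : U ≤ B := (Nat.lt_of_floor_lt hq.1.1).le.trans (by exact_mod_cast hq.2)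
    have hcard : T.card ≤ B := by
      calc T.card ≤ (Finset.Ioc 0 B).card := by
            refine Finset.card_le_card fun n hn ↦ ?_
            simp only [T, Finset.mem_filter, Finset.mem_Ioc] at hn ⊢
            omega
        _ = B := by simp
    have hcard' : (T.card : ℝ) ≤ B := by exact_mod_cast hcard
    rw [le_div_iff₀ hU]
    calc T.card * X * U ≤ B * X * B := by gcongr
      _ = _ := by ring

/-- **Dyadic block estimate.** For `x ≥ 2` and `1 ≤ 2U ≤ Q`,
`∑_{U < q ≤ 2U} (1/φ(q)) log(2Q/q) ∑_{χ primitive mod q} |ψ'_K(x, χ∘N)|²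
  ≪ (x/U + U) x log x log(2Q/U)`, the implied constant depending only on `K`. -/
theorem dyadic_block_bound (K : Type*) [Field K] [NumberField K] [IsGalois ℚ K] :
    ∃ C : ℝ, 0 < C ∧ ∀ x U Q : ℝ, 2 ≤ x → 1 ≤ 2 * U → 2 * U ≤ Q →
      ∑ q ∈ Finset.Ioc ⌊U⌋₊ ⌊2 * U⌋₊, (1 / q.totient : ℝ) * Real.log (2 * Q / q) *
          ∑ᶠ χ ∈ {χ : DirichletCharacter ℂ q | χ.IsPrimitive}, ‖psiKChi' K x χ‖ ^ 2 ≤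
        C * ((x / U + U) * x * Real.log x * Real.log (2 * Q / U)) := by
  obtain ⟨B, hB⟩ := exists_bound_isPrimitive_trivial_on_Gq K
  set c : ℝ := (Module.finrank ℚ K : ℝ) ^ 2 * (Real.log 4 + 4)
  have hc : 0 ≤ c := by
    have : 0 ≤ Real.log 4 := Real.log_nonneg (by norm_num)
    positivity
  refine ⟨72 * c + 4 * (B : ℝ) ^ 2 + 1, by positivity, fun x U Q hx hU hQ ↦ ?_⟩
  have hU0 : 0 < U := by linarith
  have hx0 : 0 < x := by linarith
  have hR : ⌊2 * U⌋₊ ≠ 0 := (Nat.floor_pos.mpr hU).ne'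
  set R := ⌊2 * U⌋₊ with hRdef
  set D := Finset.Ioc ⌊U⌋₊ R with hD
  set L := Real.log (2 * Q / U) with hL
  set N := ⌊x⌋₊ + 1 with hN
  have hL0 : 0 ≤ L := Real.log_nonneg (by rw [le_div_iff₀ hU0]; linarith)
  have hlogx : 1 / 2 ≤ Real.log x := by
    have := Real.log_two_gt_d9
    have := Real.log_le_log (by norm_num) hx
    linarith
  have hRU : (R : ℝ) ≤ 2 * U := Nat.floor_le (by linarith)
  have hDmem : ∀ q ∈ D, U < q ∧ q ≠ 0 ∧ q ≤ R := by
    intro q hq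
    rw [hD, Finset.mem_Ioc] at hq
    exact ⟨Nat.lt_of_floor_lt hq.1, by omega, hq.2⟩
  set P : ℕ → ℝ := fun q ↦
    ∑ χ : DirichletCharacter ℂ q with χ.IsPrimitive, ‖psiKChi K x χ‖ ^ 2
  have hterm : ∀ q ∈ D, (1 / q.totient : ℝ) * Real.log (2 * Q / q) *
      ∑ᶠ χ ∈ {χ : DirichletCharacter ℂ q | χ.IsPrimitive}, ‖psiKChi' K x χ‖ ^ 2 ≤
      L * (2 / U * (q / q.totient * P q) + if q ≤ B then 2 * x ^ 2 else 0) := by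
    intro q hq
    obtain ⟨hUq, hq0, hqR⟩ := hDmem q hq
    have : NeZero q := ⟨hq0⟩
    have hqpos : (0 : ℝ) < q := by linarith
    have hφ : (0 : ℝ) < q.totient := by
      exact_mod_cast Nat.totient_pos.mpr (Nat.pos_of_ne_zero hq0)
    have hfs : ∑ᶠ χ ∈ {χ : DirichletCharacter ℂ q | χ.IsPrimitive}, ‖psiKChi' K x χ‖ ^ 2 =
        ∑ χ : DirichletCharacter ℂ q with χ.IsPrimitive, ‖psiKChi' K x χ‖ ^ 2 :=
      finsum_mem_eq_sum_of_inter_support_eq _ (by ext; simp)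
    have hqQ : (q : ℝ) ≤ Q := by
      have : (q : ℝ) ≤ R := by exact_mod_cast hqR
      linarith
    have hlog0 : 0 ≤ Real.log (2 * Q / q) :=
      Real.log_nonneg (by rw [le_div_iff₀ hqpos]; linarith)
    have hlogL : Real.log (2 * Q / q) ≤ L := by
      apply Real.log_le_log
      · have : 0 < Q := by linarith
        positivity
      · have : 0 < Q := by linarith
        gcongr
    have hP0 : 0 ≤ P q := Finset.sum_nonneg fun _ _ ↦ sq_nonneg _
    have hone : 1 ≤ (q : ℝ) / U := by rw [le_div_iff₀ hU0]; linarith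
    rw [hfs, mul_comm (1 / (q.totient : ℝ)), mul_assoc]
    have hmain := sum_primitive_norm_psiKChi'_sq_le K hB x q
    refine mul_le_mul hlogL ?_ (by positivity) hL0
    refine (mul_le_mul_of_nonneg_left hmain (by positivity)).trans ?_
    rw [mul_add, ← mul_assoc (1 / (q.totient : ℝ)) (q.totient : ℝ), one_div_mul_cancel hφ.ne',
      one_mul]
    gcongr ?_ + _
    calc 1 / (q.totient : ℝ) * (2 * P q) = 1 * (2 * (P q / q.totient)) := by ring
      _ ≤ q / U * (2 * (P q / q.totient)) := by gcongr
      _ = _ := by ring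
  have hsieve : ∑ q ∈ D, (q / q.totient : ℝ) * P q ≤
      9 * ((N : ℝ) + (R : ℝ) ^ 2) * (c * (x * Real.log x)) := by
    have h1 := multiplicative_large_sieve D hR (fun q hq ↦ (hDmem q hq).2) N
      fun n ↦ (normCoeff K n : ℂ)
    simp_rw [hN, ← psiKChi_eq_sum hx0.le, Complex.norm_real, Real.norm_eq_abs, sq_abs] at h1
    refine h1.trans ?_
    have h2 := sum_normCoeff_sq_le K (x := x) (by linarith)
    gcongr
  have hNx : (N : ℝ) ≤ 2 * x := by
    have := Nat.floor_le hx0.le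
    rw [hN]
    push_cast
    linarith
  have hR2 : (R : ℝ) ^ 2 ≤ 4 * U ^ 2 := by nlinarith [Nat.cast_nonneg (α := ℝ) R]
  calc _ ≤ ∑ q ∈ D, L * (2 / U * (q / q.totient * P q) + if q ≤ B then 2 * x ^ 2 else 0) :=
        Finset.sum_le_sum hterm
    _ = L * (2 / U * ∑ q ∈ D, (q / q.totient : ℝ) * P q +
          ∑ q ∈ D, if q ≤ B then 2 * x ^ 2 else 0) := by
        rw [← Finset.mul_sum, Finset.sum_add_distrib, Finset.mul_sum]
    _ ≤ L * (2 / U * (9 * (2 * x + 4 * U ^ 2) * (c * (x * Real.log x))) +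
          2 * x ^ 2 * (B : ℝ) ^ 2 / U) := by
        gcongr
        · refine hsieve.trans ?_
          gcongr
        · exact sum_Ioc_ite_le hU0 (by positivity) B R
    _ ≤ L * (72 * c * ((x / U + U) * x * Real.log x) +
          4 * (B : ℝ) ^ 2 * ((x / U + U) * x * Real.log x)) := by
        refine mul_le_mul_of_nonneg_left (add_le_add ?_ ?_) hL0
        · have h1 : 2 / U * (9 * (2 * x + 4 * U ^ 2) * (c * (x * Real.log x))) =
              (36 * (x / U) + 72 * U) * (c * (x * Real.log x)) := by
            field_simp
            ring
          have h2 : 72 * c * ((x / U + U) * x * Real.log x) =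
              (72 * (x / U) + 72 * U) * (c * (x * Real.log x)) := by ring
          rw [h1, h2]
          gcongr
          norm_num
        · calc 2 * x ^ 2 * (B : ℝ) ^ 2 / U = 4 * (B : ℝ) ^ 2 * ((x / U + 0) * x * (1 / 2)) := by
                ring
            _ ≤ _ := by gcongr
    _ ≤ _ := by
        have : 0 ≤ (x / U + U) * x * Real.log x * L := by positivity
        nlinarith
end
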